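/- arXiv:2303.16525 — 2 statements merged into one kernel-verified Lean document; each statement's English description precedes it below -/
import Mathlib

section
/- Let D ⊆ ℂⁿ be a domain, z ∈ D, ψ plurisubharmonic on D with A²(D, e^{−ψ}) ≠ {0}, and ξ ∈ ℓ₁^{(n)}. Then there exists a holomorphic function F₀ ∈ A²(D, e^{−ψ}) with F₀ ≠ 0 such that K^ψ_{ξ,D}(z) = |(ξ·F₀)(z)|² / ∫_D |F₀|² e^{−ψ}; i.e., the supremum defining the ξ-Bergman kernel is attained. -/
open MeasureTheory Filter Topology Complex
open scoped ENNReal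
noncomputable section

/-- The total degree `|α|` of a multi-index. -/
def mdeg {n : ℕ} (α : Fin n → ℕ) : ℕ := ∑ i, α i

/-- The factorial `α!` of a multi-index. -/
def mfact {n : ℕ} (α : Fin n → ℕ) : ℕ := ∏ i, Nat.factorial (α i)

/-- Partial derivative in the `i`-th coordinate direction. -/
def pderivC {n : ℕ} (i : Fin n) (f : (Fin n → ℂ) → ℂ) : (Fin n → ℂ) → ℂ :=
  fun z => deriv (fun t : ℂ => f (Function.update z i t)) (z i)

/-- Iterated partial derivative `∂^{|α|} f / ∂z^α`. -/
def multiDeriv {n : ℕ} (α : Fin n → ℕ) (f : (Fin n → ℂ) → ℂ) : (Fin n → ℂ) → ℂ :=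
  (List.finRange n).foldr (fun i g => (pderivC i)^[α i] g) f

/-- Membership in `ℓ₁^{(n)}`: `∑_α |ξ_α| ρ^{|α|} < ∞` for every `ρ > 0`. -/
def MemL1 {n : ℕ} (ξ : (Fin n → ℕ) → ℂ) : Prop :=
  ∀ ρ : ℝ, 0 < ρ → Summable fun α : Fin n → ℕ => ‖ξ α‖ * ρ ^ mdeg α

/-- The action `(ξ·f)(z) = ∑_α ξ_α f^{(α)}(z)/α!`. -/
def xiAct {n : ℕ} (ξ : (Fin n → ℕ) → ℂ) (f : (Fin n → ℂ) → ℂ) (z : Fin n → ℂ) : ℂ :=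
  ∑' α : Fin n → ℕ, ξ α * multiDeriv α f z / (mfact α : ℂ)

/-- Plurisubharmonicity of an `EReal`-valued function on a set: upper semicontinuity
together with the sub-mean value inequality on every complex circle whose closed disc
is contained in the set (expressed via integrable real-valued majorants). -/
def PlurisubharmonicOn {E : Type*} [NormedAddCommGroup E] [NormedSpace ℂ E]
    (f : E → EReal) (s : Set E) : Prop :=
  UpperSemicontinuousOn f s ∧
  ∀ z ∈ s, ∀ v : E, (∀ t : ℂ, ‖t‖ ≤ 1 → z + t • v ∈ s) →
    ∀ g : ℝ → ℝ, IntervalIntegrable g volume 0 (2 * Real.pi) →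
      (∀ θ : ℝ, f (z + Complex.exp (θ * Complex.I) • v) ≤ (g θ : EReal)) →
      f z ≤ (((2 * Real.pi)⁻¹ * ∫ θ in (0:ℝ)..(2 * Real.pi), g θ : ℝ) : EReal)

/-- The weighted `L²` integral `∫_D |f|² e^{-ψ}`. -/
def wL2 {n : ℕ} (D : Set (Fin n → ℂ)) (ψ : (Fin n → ℂ) → ℝ) (f : (Fin n → ℂ) → ℂ) : ℝ≥0∞ :=
  ∫⁻ z in D, ENNReal.ofReal (‖f z‖ ^ 2 * Real.exp (-ψ z))

/-- Membership in the weighted Bergman space `A²(D, e^{-ψ})`. -/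
def MemA2 {n : ℕ} (D : Set (Fin n → ℂ)) (ψ : (Fin n → ℂ) → ℝ) (f : (Fin n → ℂ) → ℂ) : Prop :=
  DifferentiableOn ℂ f D ∧ wL2 D ψ f < ⊤

/-- The weighted `ξ`-Bergman kernel `K^ψ_{ξ,D}(z)`. -/
def xiBergman {n : ℕ} (ξ : (Fin n → ℕ) → ℂ) (D : Set (Fin n → ℂ))
    (ψ : (Fin n → ℂ) → ℝ) (z : Fin n → ℂ) : ℝ≥0∞ :=
  ⨆ f : {f // MemA2 D ψ f}, ENNReal.ofReal (‖xiAct ξ f.1 z‖ ^ 2) / wL2 D ψ f.1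

/-- The locally uniformly bounded property for a functional-valued function on `D`. -/
def LocUnifBdd {n m : ℕ} (ξ : (Fin m → ℂ) → (Fin n → ℕ) → ℂ) (D : Set (Fin m → ℂ)) : Prop :=
  ∀ w ∈ D, ∀ ρ : ℝ, 0 < ρ → ∃ V ∈ 𝓝 w, ∃ C : ℝ,
    ∀ w' ∈ V ∩ D, (∑' α : Fin n → ℕ, ENNReal.ofReal (‖ξ w' α‖ * ρ ^ mdeg α)) ≤ ENNReal.ofReal C

theorem norm_fderiv_le_of_norm_le {E : Type*} [NormedAddCommGroup E] [NormedSpace ℂ E]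
    {f : E → ℂ} {c : E} {R M : ℝ} (hR : 0 < R) (hd : DifferentiableOn ℂ f (Metric.ball c R))
    (hM : ∀ w ∈ Metric.ball c R, ‖f w‖ ≤ M) : ‖fderiv ℂ f c‖ ≤ 2 * M / R := by
  refine Complex.norm_fderiv_le_div_of_mapsTo_ball hd (fun w hw => ?_) hR
  rw [mem_closedBall_iff_norm]
  have h1 := hM w hw
  have h2 := hM c (Metric.mem_ball_self hR)
  linarith [norm_sub_le (f w) (f c)]

/-- A uniform limit of holomorphic functions on a ball is complex differentiable at the center. -/
theorem differentiableAt_of_tendstoUniformlyOn_ball {E : Type*} [NormedAddCommGroup E]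
    [NormedSpace ℂ E] {F : ℕ → E → ℂ} {f : E → ℂ} {x : E} {r : ℝ} (hr : 0 < r)
    (hF : ∀ k, DifferentiableOn ℂ (F k) (Metric.ball x r))
    (hlim : TendstoUniformlyOn F f atTop (Metric.ball x r)) : DifferentiableAt ℂ f x := by
  have hr2 : 0 < r / 2 := by positivity
  have hsub : ∀ y ∈ Metric.ball x (r / 2), Metric.ball y (r / 2) ⊆ Metric.ball x r := by
    intro y hy
    apply Metric.ball_subset_ball'
    have := Metric.mem_ball.1 hy
    linarith
  have hdiff : ∀ k, ∀ y ∈ Metric.ball x (r / 2), HasFDerivAt (F k) (fderiv ℂ (F k) y) y := by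
    intro k y hy
    exact ((hF k).differentiableAt (Metric.isOpen_ball.mem_nhds
      (hsub y hy (Metric.mem_ball_self hr2)))).hasFDerivAt
  have hcau : UniformCauchySeqOn (fun k => fderiv ℂ (F k)) atTop (Metric.ball x (r / 2)) := by
    rw [Metric.uniformCauchySeqOn_iff]
    intro ε hε
    obtain ⟨N, hN⟩ := Metric.uniformCauchySeqOn_iff.1 hlim.uniformCauchySeqOn (ε * r / 8)
      (by positivity)
    refine ⟨N, fun m hm k hk y hy => ?_⟩
    have hy' := hsub y hy
    have := norm_fderiv_le_of_norm_le (f := F m - F k) hr2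
      (((hF m).mono hy').sub ((hF k).mono hy'))
      (fun w hw => by simpa [dist_eq_norm] using (hN m hm k hk w (hy' hw)).le)
    rw [fderiv_sub (hdiff m y hy).differentiableAt (hdiff k y hy).differentiableAt] at this
    rw [dist_eq_norm]
    refine this.trans_lt ?_
    rw [div_lt_iff₀ hr2]
    nlinarith [mul_pos hε hr]
  have hex : ∀ y ∈ Metric.ball x (r / 2), ∃ L, Tendsto (fun k => fderiv ℂ (F k) y) atTop (𝓝 L) :=
    fun y hy => cauchySeq_tendsto_of_complete (hcau.cauchySeq hy)
  choose! g hg using hex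
  exact (hasFDerivAt_of_tendstoUniformlyOn Metric.isOpen_ball
    (hcau.tendstoUniformlyOn_of_tendsto hg) hdiff
    (fun y hy => hlim.tendsto_at (Metric.ball_subset_ball (by linarith) hy))
    (Metric.mem_ball_self hr2)).differentiableAt

/-- Quantitative convergence of difference quotients of a bounded holomorphic function. -/
theorem norm_slope_sub_deriv_le {φ : ℂ → ℂ} {δ M : ℝ} (hδ : 0 < δ)
    (hd : DifferentiableOn ℂ φ (Metric.ball 0 δ)) (hM : ∀ t ∈ Metric.ball (0 : ℂ) δ, ‖φ t‖ ≤ M)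
    {t : ℂ} (ht : t ∈ Metric.ball (0 : ℂ) δ) (ht0 : t ≠ 0) :
    ‖(φ t - φ 0) / t - deriv φ 0‖ ≤ 4 * M / δ / δ * ‖t‖ := by
  have hb : ∀ s ∈ Metric.ball (0 : ℂ) δ, ‖dslope φ 0 s‖ ≤ 2 * M / δ := fun s hs => by
    refine Complex.norm_dslope_le_div_of_mapsTo_ball hd (fun w hw => ?_) hs
    rw [mem_closedBall_iff_norm]
    have h1 := hM w hw
    have h2 := hM 0 (Metric.mem_ball_self hδ)
    linarith [norm_sub_le (φ w) (φ 0)]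
  have hd' : DifferentiableOn ℂ (dslope φ 0) (Metric.ball 0 δ) :=
    (Complex.differentiableOn_dslope (Metric.ball_mem_nhds _ hδ)).2 hd
  have := Complex.dist_le_div_mul_dist_of_mapsTo_ball (R₂ := 4 * M / δ) hd' (fun w hw => by
    rw [mem_closedBall_iff_norm]
    have h1 := hb w hw
    have h2 := hb 0 (Metric.mem_ball_self hδ)
    have : 4 * M / δ = 2 * M / δ + 2 * M / δ := by ring
    linarith [norm_sub_le (dslope φ 0 w) (dslope φ 0 0)]) ht
  rw [dslope_same, dslope_of_ne _ ht0, dist_eq_norm, dist_zero_right, slope_def_field,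
    sub_zero] at this
  exact this

/-- Directional derivatives of holomorphic functions are holomorphic. -/
theorem differentiableOn_fderiv_apply {E : Type*} [NormedAddCommGroup E] [NormedSpace ℂ E]
    {f : E → ℂ} {U : Set E} (hU : IsOpen U) (hf : DifferentiableOn ℂ f U) (v : E) :
    DifferentiableOn ℂ (fun w => fderiv ℂ f w v) U := by
  intro x hx
  obtain ⟨ρ, hρ, hρU, hρM⟩ : ∃ ρ > 0, Metric.ball x (2 * ρ) ⊆ U ∧
      ∀ w ∈ Metric.ball x (2 * ρ), ‖f w‖ ≤ ‖f x‖ + 1 := by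
    have h1 : ∀ᶠ w in 𝓝 x, ‖f w‖ < ‖f x‖ + 1 :=
      (hf.continuousOn.continuousAt (hU.mem_nhds hx)).norm.eventually_lt_const (by linarith)
    obtain ⟨ε, hε, h⟩ := Metric.eventually_nhds_iff_ball.1 (h1.and (hU.mem_nhds hx))
    refine ⟨ε / 2, by positivity, fun w hw => ?_, fun w hw => ?_⟩
    · exact (h w (by rwa [mul_div_cancel₀ _ two_ne_zero] at hw)).2
    · exact (h w (by rwa [mul_div_cancel₀ _ two_ne_zero] at hw)).1.le
  set M := ‖f x‖ + 1
  have hv : 0 < ‖v‖ + 1 := by positivity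
  set δ := ρ / (‖v‖ + 1) with hδ
  have hδ0 : 0 < δ := by positivity
  have hball : ∀ w ∈ Metric.ball x ρ, ∀ t ∈ Metric.ball (0 : ℂ) δ,
      w + t • v ∈ Metric.ball x (2 * ρ) := by
    intro w hw t ht
    rw [mem_ball_iff_norm] at *
    rw [sub_zero] at ht
    have h1 : ‖t‖ * (‖v‖ + 1) < ρ := by rwa [hδ, lt_div_iff₀ hv] at ht
    calc ‖w + t • v - x‖ = ‖(w - x) + t • v‖ := by congr 1; abel
      _ ≤ ‖w - x‖ + ‖t‖ * ‖v‖ := (norm_add_le _ _).trans (by rw [norm_smul])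
      _ < 2 * ρ := by nlinarith [norm_nonneg t]
  set h : ℕ → ℂ := fun k => (δ / (k + 2) : ℝ)
  have hnorm : ∀ k, ‖h k‖ = δ / (k + 2) := fun k => by
    rw [Complex.norm_real, Real.norm_of_nonneg (by positivity)]
  have hh : ∀ k, h k ∈ Metric.ball (0 : ℂ) δ := fun k => by
    rw [mem_ball_zero_iff, hnorm]
    apply div_lt_self hδ0
    have : (0 : ℝ) ≤ k := k.cast_nonneg
    linarith
  have hh0 : ∀ k, h k ≠ 0 := fun k => by
    rw [← norm_pos_iff, hnorm]; positivity
  have hdf : ∀ w ∈ Metric.ball x ρ, ∀ t ∈ Metric.ball (0 : ℂ) δ, DifferentiableAt ℂ f (w + t • v) :=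
    fun w hw t ht => hf.differentiableAt (hU.mem_nhds (hρU (hball w hw t ht)))
  refine (differentiableAt_of_tendstoUniformlyOn_ball (r := ρ) hρ
    (F := fun k w => (f (w + h k • v) - f w) / h k) (fun k w hw => ?_) ?_).differentiableWithinAt
  · have h1 := hdf w hw _ (hh k)
    have h2 := hdf w hw 0 (Metric.mem_ball_self hδ0)
    rw [zero_smul, add_zero] at h2
    simp only [div_eq_mul_inv]
    refine ((DifferentiableAt.fun_sub ?_ h2).mul_const _).differentiableWithinAt
    exact DifferentiableAt.comp w h1 (by fun_prop)
  · rw [Metric.tendstoUniformlyOn_iff]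
    intro ε hε
    have hlim : Tendsto (fun k : ℕ => 4 * M / δ / δ * (δ / ((k : ℝ) + 2))) atTop (𝓝 0) := by
      rw [← mul_zero (4 * M / δ / δ)]
      exact (tendsto_const_nhds.div_atTop
        (tendsto_atTop_add_const_right _ _ tendsto_natCast_atTop_atTop)).const_mul _
    filter_upwards [hlim.eventually_lt_const hε] with k hk w hw
    have hφ : HasDerivAt (fun t : ℂ => f (w + t • v)) (fderiv ℂ f w v) 0 := by
      have h2 := hdf w hw 0 (Metric.mem_ball_self hδ0)
      have h3 : HasDerivAt (fun t : ℂ => w + t • v) v 0 := by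
        simpa using ((hasDerivAt_id (0 : ℂ)).smul_const v).const_add w
      have h4 := h2.hasFDerivAt.comp_hasDerivAt (0 : ℂ) h3
      simpa [Function.comp_def] using h4
    have hest := norm_slope_sub_deriv_le (φ := fun t : ℂ => f (w + t • v)) (M := M) hδ0
      (fun t ht => (DifferentiableAt.comp t (hdf w hw t ht)
        (by fun_prop)).differentiableWithinAt)
      (fun t ht => hρM _ (hball w hw t ht)) (hh k) (hh0 k)
    rw [hφ.deriv, hnorm] at hest
    rw [dist_comm, dist_eq_norm]
    simp only [zero_smul, add_zero] at hest
    exact hest.trans_lt hk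

theorem pderivC_eq_fderiv {n : ℕ} (i : Fin n) {f : (Fin n → ℂ) → ℂ} {w : Fin n → ℂ}
    (hf : DifferentiableAt ℂ f w) : pderivC i f w = fderiv ℂ f w (Pi.single i 1) := by
  have h : HasFDerivAt f (fderiv ℂ f w) (Function.update w i (w i)) := by
    rw [Function.update_eq_self]; exact hf.hasFDerivAt
  exact (h.comp_hasDerivAt (w i) (hasDerivAt_update w i (w i))).deriv

theorem differentiableOn_pderivC {n : ℕ} (i : Fin n) {f : (Fin n → ℂ) → ℂ} {D : Set (Fin n → ℂ)}
    (hD : IsOpen D) (hf : DifferentiableOn ℂ f D) : DifferentiableOn ℂ (pderivC i f) D :=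
  (differentiableOn_fderiv_apply hD hf (Pi.single i 1)).congr fun _ hw =>
    pderivC_eq_fderiv i (hf.differentiableAt (hD.mem_nhds hw))

theorem eqOn_pderivC_linear {n : ℕ} (i : Fin n) {f g h : (Fin n → ℂ) → ℂ} {D : Set (Fin n → ℂ)}
    {a b : ℂ} (hD : IsOpen D) (hf : DifferentiableOn ℂ f D) (hg : DifferentiableOn ℂ g D)
    (hh : Set.EqOn h (fun w => a * f w + b * g w) D) :
    Set.EqOn (pderivC i h) (fun w => a * pderivC i f w + b * pderivC i g w) D := by
  intro w hw
  have hfw := hf.differentiableAt (hD.mem_nhds hw)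
  have hgw := hg.differentiableAt (hD.mem_nhds hw)
  have hhw : HasFDerivAt h (a • fderiv ℂ f w + b • fderiv ℂ g w) w :=
    ((hfw.hasFDerivAt.const_mul a).add (hgw.hasFDerivAt.const_mul b)).congr_of_eventuallyEq
      (hh.eventuallyEq_of_mem (hD.mem_nhds hw))
  simp only [pderivC_eq_fderiv i hfw, pderivC_eq_fderiv i hgw,
    pderivC_eq_fderiv i hhw.differentiableAt, hhw.fderiv]
  simp

theorem differentiableOn_pderivC_iterate {n : ℕ} (i : Fin n) (k : ℕ) {f : (Fin n → ℂ) → ℂ}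
    {D : Set (Fin n → ℂ)} (hD : IsOpen D) (hf : DifferentiableOn ℂ f D) :
    DifferentiableOn ℂ ((pderivC i)^[k] f) D := by
  induction k with
  | zero => exact hf
  | succ k ih => rw [Function.iterate_succ_apply']; exact differentiableOn_pderivC i hD ih

theorem eqOn_pderivC_iterate_linear {n : ℕ} (i : Fin n) (k : ℕ) {f g h : (Fin n → ℂ) → ℂ}
    {D : Set (Fin n → ℂ)} {a b : ℂ} (hD : IsOpen D) (hf : DifferentiableOn ℂ f D)
    (hg : DifferentiableOn ℂ g D) (hh : Set.EqOn h (fun w => a * f w + b * g w) D) :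
    Set.EqOn ((pderivC i)^[k] h)
      (fun w => a * (pderivC i)^[k] f w + b * (pderivC i)^[k] g w) D := by
  induction k with
  | zero => exact hh
  | succ k ih =>
    simp only [Function.iterate_succ_apply']
    exact eqOn_pderivC_linear i hD (differentiableOn_pderivC_iterate i k hD hf)
      (differentiableOn_pderivC_iterate i k hD hg) ih

/-- The iterated partial derivatives along a list of coordinates. -/
def listDeriv {n : ℕ} (α : Fin n → ℕ) (l : List (Fin n)) (f : (Fin n → ℂ) → ℂ) :
    (Fin n → ℂ) → ℂ :=
  l.foldr (fun i g => (pderivC i)^[α i] g) f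

theorem differentiableOn_listDeriv {n : ℕ} (α : Fin n → ℕ) (l : List (Fin n))
    {f : (Fin n → ℂ) → ℂ} {D : Set (Fin n → ℂ)} (hD : IsOpen D) (hf : DifferentiableOn ℂ f D) :
    DifferentiableOn ℂ (listDeriv α l f) D := by
  induction l with
  | nil => exact hf
  | cons i l ih => exact differentiableOn_pderivC_iterate i _ hD ih

theorem eqOn_listDeriv_linear {n : ℕ} (α : Fin n → ℕ) (l : List (Fin n))
    {f g h : (Fin n → ℂ) → ℂ} {D : Set (Fin n → ℂ)} {a b : ℂ} (hD : IsOpen D)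
    (hf : DifferentiableOn ℂ f D) (hg : DifferentiableOn ℂ g D)
    (hh : Set.EqOn h (fun w => a * f w + b * g w) D) :
    Set.EqOn (listDeriv α l h) (fun w => a * listDeriv α l f w + b * listDeriv α l g w) D := by
  induction l with
  | nil => exact hh
  | cons i l ih =>
    exact eqOn_pderivC_iterate_linear i _ hD (differentiableOn_listDeriv α l hD hf)
      (differentiableOn_listDeriv α l hD hg) ih

theorem pderivC_iterate_update {n : ℕ} (i : Fin n) (k : ℕ) (f : (Fin n → ℂ) → ℂ)
    (w : Fin n → ℂ) (t : ℂ) : (pderivC i)^[k] f (Function.update w i t) =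
      iteratedDeriv k (fun s => f (Function.update w i s)) t := by
  induction k generalizing t with
  | zero => simp
  | succ k ih =>
    rw [Function.iterate_succ_apply', iteratedDeriv_succ, ← funext ih]
    simp [pderivC]

/-- Cauchy's estimates on a polydisc, for derivatives along a list of distinct coordinates. -/
theorem norm_listDeriv_le {n : ℕ} (α : Fin n → ℕ) {l : List (Fin n)} (hl : l.Nodup)
    {f : (Fin n → ℂ) → ℂ} {D : Set (Fin n → ℂ)} (hD : IsOpen D) (hf : DifferentiableOn ℂ f D)
    {z : Fin n → ℂ} {r M : ℝ} (hr : 0 < r) (hz : Metric.closedBall z r ⊆ D)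
    (hM : ∀ w ∈ Metric.closedBall z r, ‖f w‖ ≤ M) {w : Fin n → ℂ}
    (hw : w ∈ Metric.closedBall z r) (hwl : ∀ i ∈ l, w i = z i) :
    ‖listDeriv α l f w‖ ≤ (l.map fun i => ((α i).factorial : ℝ) / r ^ α i).prod * M := by
  induction l generalizing w with
  | nil => simpa [listDeriv] using hM w hw
  | cons i l ih =>
    rw [List.nodup_cons] at hl
    have hu : ∀ t ∈ Metric.closedBall (z i) r,
        Function.update w i t ∈ Metric.closedBall z r := by
      intro t ht
      rw [Metric.mem_closedBall, dist_pi_le_iff hr.le] at hw ⊢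
      intro j
      rcases eq_or_ne j i with rfl | hj
      · simpa using ht
      · simpa [hj] using hw j
    have hbound : ∀ t ∈ Metric.closedBall (z i) r, ‖listDeriv α l f (Function.update w i t)‖ ≤
        (l.map fun i => ((α i).factorial : ℝ) / r ^ α i).prod * M := by
      intro t ht
      refine ih hl.2 (hu t ht) fun j hj => ?_
      have : j ≠ i := fun h => hl.1 (h ▸ hj)
      rw [Function.update_of_ne this]
      exact hwl j (List.mem_cons_of_mem _ hj)
    have hdiff : DiffContOnCl ℂ (fun t => listDeriv α l f (Function.update w i t))
        (Metric.ball (z i) r) := by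
      apply DifferentiableOn.diffContOnCl
      intro t ht
      rw [closure_ball _ hr.ne'] at ht
      exact (((differentiableOn_listDeriv α l hD hf).differentiableAt
        (hD.mem_nhds (hz (hu t ht)))).comp t
          (hasDerivAt_update w i t).differentiableAt).differentiableWithinAt
    have hC := Complex.norm_iteratedDeriv_le_of_forall_mem_sphere_norm_le (α i) hr hdiff
      fun t ht => hbound t (Metric.sphere_subset_closedBall ht)
    rw [← pderivC_iterate_update, ← hwl i (by simp), Function.update_eq_self] at hC
    refine hC.trans_eq ?_
    rw [List.map_cons, List.prod_cons]
    ring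

theorem norm_multiDeriv_div_mfact_le {n : ℕ} (α : Fin n → ℕ) {f : (Fin n → ℂ) → ℂ}
    {D : Set (Fin n → ℂ)} (hD : IsOpen D) (hf : DifferentiableOn ℂ f D)
    {z : Fin n → ℂ} {r M : ℝ} (hr : 0 < r) (hz : Metric.closedBall z r ⊆ D)
    (hM : ∀ w ∈ Metric.closedBall z r, ‖f w‖ ≤ M) :
    ‖multiDeriv α f z / (mfact α : ℂ)‖ ≤ M * r⁻¹ ^ mdeg α := by
  have h := norm_listDeriv_le α (List.nodup_finRange n) hD hf hr hz hM
    (Metric.mem_closedBall_self hr.le) fun _ _ => rfl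
  have hpos : (0 : ℝ) < mfact α := by
    exact_mod_cast Finset.prod_pos fun i _ => Nat.factorial_pos (α i)
  rw [norm_div, Complex.norm_natCast, div_le_iff₀ hpos]
  refine h.trans_eq ?_
  rw [← List.ofFn_eq_map, List.prod_ofFn, Finset.prod_div_distrib, Finset.prod_pow_eq_pow_sum]
  simp only [mfact, mdeg, Nat.cast_prod, inv_pow]
  ring

theorem norm_xiAct_term_le {n : ℕ} (ξ : (Fin n → ℕ) → ℂ) {f : (Fin n → ℂ) → ℂ}
    {D : Set (Fin n → ℂ)} (hD : IsOpen D) (hf : DifferentiableOn ℂ f D)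
    {z : Fin n → ℂ} {r M : ℝ} (hr : 0 < r) (hz : Metric.closedBall z r ⊆ D)
    (hM : ∀ w ∈ Metric.closedBall z r, ‖f w‖ ≤ M) (α : Fin n → ℕ) :
    ‖ξ α * multiDeriv α f z / (mfact α : ℂ)‖ ≤ M * (‖ξ α‖ * r⁻¹ ^ mdeg α) := by
  rw [mul_div_assoc, norm_mul]
  refine (mul_le_mul_of_nonneg_left (norm_multiDeriv_div_mfact_le α hD hf hr hz hM)
    (norm_nonneg _)).trans_eq ?_
  ring

theorem norm_xiAct_le {n : ℕ} {ξ : (Fin n → ℕ) → ℂ} (hξ : MemL1 ξ) {f : (Fin n → ℂ) → ℂ}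
    {D : Set (Fin n → ℂ)} (hD : IsOpen D) (hf : DifferentiableOn ℂ f D)
    {z : Fin n → ℂ} {r M : ℝ} (hr : 0 < r) (hz : Metric.closedBall z r ⊆ D)
    (hM : ∀ w ∈ Metric.closedBall z r, ‖f w‖ ≤ M) :
    ‖xiAct ξ f z‖ ≤ M * ∑' α : Fin n → ℕ, ‖ξ α‖ * r⁻¹ ^ mdeg α :=
  tsum_of_norm_bounded ((hξ _ (inv_pos.2 hr)).hasSum.mul_left M)
    (norm_xiAct_term_le ξ hD hf hr hz hM)

theorem summable_xiAct {n : ℕ} {ξ : (Fin n → ℕ) → ℂ} (hξ : MemL1 ξ) {f : (Fin n → ℂ) → ℂ}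
    {D : Set (Fin n → ℂ)} (hD : IsOpen D) (hf : DifferentiableOn ℂ f D)
    {z : Fin n → ℂ} (hz : z ∈ D) :
    Summable fun α : Fin n → ℕ => ξ α * multiDeriv α f z / (mfact α : ℂ) := by
  obtain ⟨r, hr, hrD⟩ := Metric.nhds_basis_closedBall.mem_iff.1 (hD.mem_nhds hz)
  obtain ⟨M, hM⟩ := (isCompact_closedBall z r).exists_bound_of_continuousOn
    (hf.continuousOn.mono hrD)
  exact Summable.of_norm_bounded ((hξ _ (inv_pos.2 hr)).mul_left M)
    (norm_xiAct_term_le ξ hD hf hr hrD hM)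

theorem xiAct_linear {n : ℕ} {ξ : (Fin n → ℕ) → ℂ} (hξ : MemL1 ξ) {f g h : (Fin n → ℂ) → ℂ}
    {D : Set (Fin n → ℂ)} {a b : ℂ} (hD : IsOpen D) (hf : DifferentiableOn ℂ f D)
    (hg : DifferentiableOn ℂ g D) (hh : Set.EqOn h (fun w => a * f w + b * g w) D)
    {z : Fin n → ℂ} (hz : z ∈ D) :
    xiAct ξ h z = a * xiAct ξ f z + b * xiAct ξ g z := by
  have hterm : ∀ α : Fin n → ℕ, ξ α * multiDeriv α h z / (mfact α : ℂ) =
      a * (ξ α * multiDeriv α f z / (mfact α : ℂ)) +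
        b * (ξ α * multiDeriv α g z / (mfact α : ℂ)) := fun α => by
    have : multiDeriv α h z = a * multiDeriv α f z + b * multiDeriv α g z :=
      eqOn_listDeriv_linear α _ hD hf hg hh hz
    rw [this]
    ring
  unfold xiAct
  rw [tsum_congr hterm, Summable.tsum_add ((summable_xiAct hξ hD hf hz).mul_left a)
    ((summable_xiAct hξ hD hg hz).mul_left b), tsum_mul_left, tsum_mul_left]

theorem xiAct_congr {n : ℕ} {ξ : (Fin n → ℕ) → ℂ} (hξ : MemL1 ξ) {f g : (Fin n → ℂ) → ℂ}
    {D : Set (Fin n → ℂ)} (hD : IsOpen D) (hf : DifferentiableOn ℂ f D)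
    (hfg : Set.EqOn g f D) {z : Fin n → ℂ} (hz : z ∈ D) : xiAct ξ g z = xiAct ξ f z := by
  simpa using xiAct_linear (a := 1) (b := 0) hξ hD hf hf (fun w hw => by simpa using hfg hw) hz

theorem enorm_sq_le_lintegral_circle {φ : ℂ → ℂ}
    (hφ : DiffContOnCl ℂ φ (Metric.ball 0 1)) :
    ‖φ 0‖ₑ ^ 2 ≤ ENNReal.ofReal (2 * Real.pi)⁻¹ *
      ∫⁻ θ in Set.Ioc (0 : ℝ) (2 * Real.pi), ‖φ (Complex.exp (θ * Complex.I))‖ₑ ^ 2 := by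
  have hd : DiffContOnCl ℂ (fun t => φ t ^ 2) (Metric.ball 0 |1|) := by
    simpa [pow_two] using! hφ.smul hφ
  have h := hd.circleAverage
  rw [Real.circleAverage_def, intervalIntegral.integral_of_le (by positivity)] at h
  rw [← enorm_pow, ← h, enorm_smul, Real.enorm_of_nonneg (by positivity)]
  gcongr
  refine (enorm_integral_le_lintegral_enorm _).trans_eq ?_
  simp [circleMap, enorm_pow]

theorem measurePreserving_smul_pi {n : ℕ} {c : ℂ} (hc : ‖c‖ = 1) :
    MeasurePreserving (fun v : Fin n → ℂ => c • v) :=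
  volume_preserving_pi (f := fun _ t => c • t) fun _ =>
    (rotation ⟨c, by simpa [Submonoid.unitSphere] using hc⟩).measurePreserving

theorem enorm_sq_mul_volume_le {n : ℕ} {f : (Fin n → ℂ) → ℂ} {D : Set (Fin n → ℂ)}
    (hD : IsOpen D) (hf : DifferentiableOn ℂ f D) {w : Fin n → ℂ} {R : ℝ}
    (hw : Metric.closedBall w R ⊆ D) :
    ‖f w‖ₑ ^ 2 * volume (Metric.closedBall (0 : Fin n → ℂ) R) ≤
      ∫⁻ x in Metric.closedBall w R, ‖f x‖ₑ ^ 2 := by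
  set B := Metric.closedBall (0 : Fin n → ℂ) R with hB
  have hBm : MeasurableSet B := Metric.isClosed_closedBall.measurableSet
  set G : (Fin n → ℂ) → ℝ≥0∞ := fun x => ‖D.indicator f x‖ₑ ^ 2
  have hG : Measurable G := by
    refine Measurable.pow_const (Measurable.enorm ?_) 2
    classical
    rw [← Set.piecewise_eq_indicator]
    exact hf.continuousOn.measurable_piecewise continuousOn_const hD.measurableSet
  have hGf : ∀ x ∈ Metric.closedBall w R, ‖f x‖ₑ ^ 2 = G x := fun x hx => by
    simp [G, Set.indicator_of_mem (hw hx)]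
  have hmem : ∀ v ∈ B, ∀ t : ℂ, ‖t‖ ≤ 1 → w + t • v ∈ Metric.closedBall w R := by
    intro v hv t ht
    rw [hB, mem_closedBall_zero_iff] at hv
    rw [mem_closedBall_iff_norm, add_sub_cancel_left, norm_smul]
    nlinarith [norm_nonneg v]
  have hpt : ∀ v ∈ B, ‖f w‖ₑ ^ 2 ≤ ENNReal.ofReal (2 * Real.pi)⁻¹ *
      ∫⁻ θ in Set.Ioc (0 : ℝ) (2 * Real.pi), G (w + Complex.exp (θ * Complex.I) • v) := by
    intro v hv
    have hd : DiffContOnCl ℂ (fun t : ℂ => f (w + t • v)) (Metric.ball 0 1) := by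
      apply DifferentiableOn.diffContOnCl
      intro t ht
      rw [closure_ball _ one_ne_zero, mem_closedBall_zero_iff] at ht
      have h1 : DifferentiableAt ℂ f (w + t • v) :=
        hf.differentiableAt (hD.mem_nhds (hw (hmem v hv t ht)))
      have h2 : DifferentiableAt ℂ (fun t : ℂ => w + t • v) t := by fun_prop
      exact (h1.fun_comp' t h2).differentiableWithinAt
    have := enorm_sq_le_lintegral_circle hd
    simp only [zero_smul, add_zero] at this
    refine this.trans_eq ?_
    congr 1
    refine lintegral_congr fun θ => hGf _ (hmem v hv _ ?_)
    rw [Complex.norm_exp_ofReal_mul_I]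
  have htrans : ∫⁻ v in B, G (w + v) = ∫⁻ x in Metric.closedBall w R, ‖f x‖ₑ ^ 2 := by
    have hpre : (fun v => w + v) ⁻¹' Metric.closedBall w R = B := by
      ext v; simp [hB]
    rw [setLIntegral_congr_fun Metric.isClosed_closedBall.measurableSet hGf, ← hpre]
    exact (measurePreserving_add_left volume w).setLIntegral_comp_preimage
      Metric.isClosed_closedBall.measurableSet hG
  have hrot : ∀ θ : ℝ, ∫⁻ v in B, G (w + Complex.exp (θ * Complex.I) • v) =
      ∫⁻ v in B, G (w + v) := by
    intro θ
    have hc := Complex.norm_exp_ofReal_mul_I θ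
    have hpre : (fun v : Fin n → ℂ => Complex.exp (θ * Complex.I) • v) ⁻¹' B = B := by
      ext v; simp [hB, norm_smul, hc]
    conv_lhs => rw [← hpre]
    exact (measurePreserving_smul_pi hc).setLIntegral_comp_preimage hBm
      (hG.comp (measurable_const_add w))
  calc ‖f w‖ₑ ^ 2 * volume B = ∫⁻ _ in B, ‖f w‖ₑ ^ 2 := by rw [setLIntegral_const]
    _ ≤ ∫⁻ v in B, ENNReal.ofReal (2 * Real.pi)⁻¹ *
        ∫⁻ θ in Set.Ioc (0 : ℝ) (2 * Real.pi), G (w + Complex.exp (θ * Complex.I) • v) :=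
      setLIntegral_mono' hBm hpt
    _ = ENNReal.ofReal (2 * Real.pi)⁻¹ * ∫⁻ v in B,
        ∫⁻ θ in Set.Ioc (0 : ℝ) (2 * Real.pi), G (w + Complex.exp (θ * Complex.I) • v) := by
      rw [lintegral_const_mul' _ _ ENNReal.ofReal_ne_top]
    _ = ENNReal.ofReal (2 * Real.pi)⁻¹ * ∫⁻ θ in Set.Ioc (0 : ℝ) (2 * Real.pi),
        ∫⁻ v in B, G (w + Complex.exp (θ * Complex.I) • v) := by
      rw [lintegral_lintegral_swap]
      refine (hG.comp ?_).aemeasurable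
      exact Continuous.measurable (by fun_prop)
    _ = ∫⁻ x in Metric.closedBall w R, ‖f x‖ₑ ^ 2 := by
      simp_rw [hrot, htrans]
      rw [setLIntegral_const, Real.volume_Ioc, sub_zero, mul_comm, mul_assoc,
        ← ENNReal.ofReal_mul (by positivity), mul_inv_cancel₀ (by positivity),
        ENNReal.ofReal_one, mul_one]

/-- Locally uniform pointwise bounds by the weighted `L²` norm, for a weight that is upper
semicontinuous. -/
theorem exists_enorm_sq_le_wL2 {n : ℕ} {D : Set (Fin n → ℂ)} (hD : IsOpen D)
    {ψ : (Fin n → ℂ) → ℝ} (hψ : UpperSemicontinuousOn ψ D) {x : Fin n → ℂ} (hx : x ∈ D) :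
    ∃ r > 0, Metric.closedBall x r ⊆ D ∧ ∃ C : ℝ≥0∞, C ≠ ⊤ ∧
      ∀ f : (Fin n → ℂ) → ℂ, DifferentiableOn ℂ f D → ∀ w ∈ Metric.closedBall x r,
        ‖f w‖ₑ ^ 2 ≤ C * wL2 D ψ f := by
  have h1 : ∀ᶠ y in 𝓝 x, ψ y < ψ x + 1 := by
    have := hψ x hx (ψ x + 1) (by linarith)
    rwa [hD.nhdsWithin_eq hx] at this
  obtain ⟨ε, hε, hball⟩ := Metric.nhds_basis_closedBall.mem_iff.1 (h1.and (hD.mem_nhds hx))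
  set r := ε / 2
  have hr : 0 < r := by positivity
  refine ⟨r, hr, fun y hy => (hball (Metric.closedBall_subset_closedBall (by simp [r, hε.le]) hy)).2,
    ENNReal.ofReal (Real.exp (ψ x + 1)) / volume (Metric.closedBall (0 : Fin n → ℂ) r),
    ENNReal.div_ne_top ENNReal.ofReal_ne_top
      (Metric.measure_closedBall_pos _ _ hr).ne', fun f hf w hw => ?_⟩
  have hsub : Metric.closedBall w r ⊆ Metric.closedBall x ε := by
    apply Metric.closedBall_subset_closedBall'
    have := Metric.mem_closedBall.1 hw
    simp only [r] at *
    linarith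
  have hmv := enorm_sq_mul_volume_le hD hf fun y hy => (hball (hsub hy)).2
  rw [ENNReal.mul_comm_div, mul_div_assoc', mul_comm,
    ENNReal.le_div_iff_mul_le (Or.inl (Metric.measure_closedBall_pos _ _ hr).ne')
      (Or.inl measure_closedBall_lt_top.ne)]
  refine hmv.trans ?_
  calc ∫⁻ y in Metric.closedBall w r, ‖f y‖ₑ ^ 2
      ≤ ∫⁻ y in Metric.closedBall w r, ENNReal.ofReal (Real.exp (ψ x + 1)) *
          ENNReal.ofReal (‖f y‖ ^ 2 * Real.exp (-ψ y)) := by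
        refine setLIntegral_mono' Metric.isClosed_closedBall.measurableSet fun y hy => ?_
        rw [← ENNReal.ofReal_mul (by positivity), ← ofReal_norm,
          ← ENNReal.ofReal_pow (by positivity)]
        apply ENNReal.ofReal_le_ofReal
        have : 1 ≤ Real.exp (ψ x + 1) * Real.exp (-ψ y) := by
          rw [← Real.exp_add, Real.one_le_exp_iff]
          linarith [(hball (hsub hy)).1]
        nlinarith [sq_nonneg ‖f y‖]
    _ = ENNReal.ofReal (Real.exp (ψ x + 1)) * ∫⁻ y in Metric.closedBall w r,
          ENNReal.ofReal (‖f y‖ ^ 2 * Real.exp (-ψ y)) := by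
        rw [lintegral_const_mul' _ _ ENNReal.ofReal_ne_top]
    _ ≤ wL2 D ψ f * ENNReal.ofReal (Real.exp (ψ x + 1)) := by
        rw [mul_comm]
        gcongr
        exact lintegral_mono_set fun y hy => (hball (hsub hy)).2

/-- The measure `e^{-ψ} dV` on `D`. -/
def weightMeasure {n : ℕ} (D : Set (Fin n → ℂ)) (ψ : (Fin n → ℂ) → ℝ) : Measure (Fin n → ℂ) :=
  (volume.restrict D).withDensity fun x => ENNReal.ofReal (Real.exp (-ψ x))

theorem aemeasurable_weight {n : ℕ} {D : Set (Fin n → ℂ)} (hD : IsOpen D) {ψ : (Fin n → ℂ) → ℝ}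
    (hψ : UpperSemicontinuousOn ψ D) :
    AEMeasurable (fun x => ENNReal.ofReal (Real.exp (-ψ x))) (volume.restrict D) := by
  have h : AEMeasurable ψ (volume.restrict D) :=
    aemeasurable_restrict_of_measurable_subtype hD.measurableSet
      (upperSemicontinuousOn_iff_restrict.2 hψ).measurable
  exact (Real.measurable_exp.comp_aemeasurable h.neg).ennreal_ofReal

theorem ae_weightMeasure_iff {n : ℕ} {D : Set (Fin n → ℂ)} (hD : IsOpen D)
    {ψ : (Fin n → ℂ) → ℝ} (hψ : UpperSemicontinuousOn ψ D) {p : (Fin n → ℂ) → Prop} :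
    (∀ᵐ x ∂weightMeasure D ψ, p x) ↔ ∀ᵐ x ∂volume.restrict D, p x :=
  ⟨fun h => (withDensity_absolutelyContinuous' (aemeasurable_weight hD hψ)
      (Eventually.of_forall fun x => by simp [Real.exp_pos])).ae_le h,
    fun h => (withDensity_absolutelyContinuous _ _).ae_le h⟩

theorem wL2_eq_lintegral {n : ℕ} {D : Set (Fin n → ℂ)} (hD : IsOpen D)
    {ψ : (Fin n → ℂ) → ℝ} (hψ : UpperSemicontinuousOn ψ D) (f : (Fin n → ℂ) → ℂ) :
    wL2 D ψ f = ∫⁻ x, ‖f x‖ₑ ^ 2 ∂weightMeasure D ψ := by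
  rw [weightMeasure, lintegral_withDensity_eq_lintegral_mul_non_measurable₀ _
    (aemeasurable_weight hD hψ) (Eventually.of_forall fun x => ENNReal.ofReal_lt_top)]
  refine lintegral_congr fun x => ?_
  rw [Pi.mul_apply, ← ofReal_norm, ← ENNReal.ofReal_pow (by positivity),
    ← ENNReal.ofReal_mul (by positivity), mul_comm]

theorem eLpNorm_sq_eq_wL2 {n : ℕ} {D : Set (Fin n → ℂ)} (hD : IsOpen D)
    {ψ : (Fin n → ℂ) → ℝ} (hψ : UpperSemicontinuousOn ψ D) (f : (Fin n → ℂ) → ℂ) :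
    eLpNorm f 2 (weightMeasure D ψ) ^ 2 = wL2 D ψ f := by
  rw [wL2_eq_lintegral hD hψ, eLpNorm_eq_lintegral_rpow_enorm_toReal two_ne_zero (by simp),
    ← ENNReal.rpow_two, ← ENNReal.rpow_mul]
  simp

theorem enorm_sq_eq_wL2 {n : ℕ} {D : Set (Fin n → ℂ)} (hD : IsOpen D)
    {ψ : (Fin n → ℂ) → ℝ} (hψ : UpperSemicontinuousOn ψ D) {f : (Fin n → ℂ) → ℂ}
    {u : Lp ℂ 2 (weightMeasure D ψ)} (hu : u =ᵐ[weightMeasure D ψ] f) :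
    ‖u‖ₑ ^ 2 = wL2 D ψ f := by
  rw [← eLpNorm_sq_eq_wL2 hD hψ, Lp.enorm_def, eLpNorm_congr_ae hu]

theorem MemA2.memLp {n : ℕ} {D : Set (Fin n → ℂ)} (hD : IsOpen D) {ψ : (Fin n → ℂ) → ℝ}
    (hψ : UpperSemicontinuousOn ψ D) {f : (Fin n → ℂ) → ℂ} (hf : MemA2 D ψ f) :
    MemLp f 2 (weightMeasure D ψ) := by
  refine ⟨(hf.1.continuousOn.aestronglyMeasurable hD.measurableSet).mono_ac
    (withDensity_absolutelyContinuous _ _), ?_⟩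
  have h := hf.2
  rw [← eLpNorm_sq_eq_wL2 hD hψ] at h
  exact (ENNReal.pow_lt_top_iff.1 h).resolve_right two_ne_zero

theorem eqOn_of_ae_eq_weightMeasure {n : ℕ} {D : Set (Fin n → ℂ)} (hD : IsOpen D)
    {ψ : (Fin n → ℂ) → ℝ} (hψ : UpperSemicontinuousOn ψ D) {f g : (Fin n → ℂ) → ℂ}
    (hf : DifferentiableOn ℂ f D) (hg : DifferentiableOn ℂ g D)
    (h : f =ᵐ[weightMeasure D ψ] g) : Set.EqOn f g D :=
  Measure.eqOn_open_of_ae_eq ((ae_weightMeasure_iff hD hψ).1 h) hD hf.continuousOn hg.continuousOn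

theorem exists_norm_le_mul_norm {n : ℕ} {D : Set (Fin n → ℂ)} (hD : IsOpen D)
    {ψ : (Fin n → ℂ) → ℝ} (hψ : UpperSemicontinuousOn ψ D) {x : Fin n → ℂ} (hx : x ∈ D) :
    ∃ r > 0, Metric.closedBall x r ⊆ D ∧ ∃ K : ℝ, 0 ≤ K ∧
      ∀ (f : (Fin n → ℂ) → ℂ) (u : Lp ℂ 2 (weightMeasure D ψ)), DifferentiableOn ℂ f D →
        u =ᵐ[weightMeasure D ψ] f → ∀ w ∈ Metric.closedBall x r, ‖f w‖ ≤ K * ‖u‖ := by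
  obtain ⟨r, hr, hrD, C, hC, hb⟩ := exists_enorm_sq_le_wL2 hD hψ hx
  refine ⟨r, hr, hrD, √C.toReal, by positivity, fun f u hf hu w hw => ?_⟩
  have h := ENNReal.toReal_mono ?_ (hb f hf w hw)
  · rw [← enorm_sq_eq_wL2 hD hψ hu, ENNReal.toReal_mul, ENNReal.toReal_pow, ENNReal.toReal_pow,
      toReal_enorm, toReal_enorm] at h
    refine le_of_sq_le_sq ?_ (by positivity)
    rwa [mul_pow, Real.sq_sqrt ENNReal.toReal_nonneg]
  · rw [← enorm_sq_eq_wL2 hD hψ hu]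
    exact ENNReal.mul_ne_top hC (ENNReal.pow_ne_top enorm_ne_top)

/-- The weighted Bergman space as a subspace of the weighted `L²` space. -/
def bergmanSubmodule {n : ℕ} (D : Set (Fin n → ℂ)) (ψ : (Fin n → ℂ) → ℝ) :
    Submodule ℂ (Lp ℂ 2 (weightMeasure D ψ)) where
  carrier := {u | ∃ f, DifferentiableOn ℂ f D ∧ u =ᵐ[weightMeasure D ψ] f}
  zero_mem' := ⟨0, differentiableOn_const 0, Lp.coeFn_zero _ _ _⟩
  add_mem' := by
    rintro u v ⟨f, hf, hu⟩ ⟨g, hg, hv⟩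
    exact ⟨f + g, hf.add hg, (Lp.coeFn_add u v).trans (hu.add hv)⟩
  smul_mem' := by
    rintro c u ⟨f, hf, hu⟩
    exact ⟨c • f, hf.const_smul c, (Lp.coeFn_smul c u).trans (hu.const_smul c)⟩

theorem isClosed_bergmanSubmodule {n : ℕ} {D : Set (Fin n → ℂ)} (hD : IsOpen D)
    {ψ : (Fin n → ℂ) → ℝ} (hψ : UpperSemicontinuousOn ψ D) :
    IsClosed (bergmanSubmodule D ψ : Set (Lp ℂ 2 (weightMeasure D ψ))) := by
  refine IsSeqClosed.isClosed fun u v hu huv => ?_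
  choose f hf huf using hu
  have hcau : ∀ x ∈ D, ∃ r > 0, Metric.closedBall x r ⊆ D ∧
      UniformCauchySeqOn f atTop (Metric.closedBall x r) := by
    intro x hx
    obtain ⟨r, hr, hrD, K, hK, hb⟩ := exists_norm_le_mul_norm hD hψ hx
    refine ⟨r, hr, hrD, Metric.uniformCauchySeqOn_iff.2 fun ε hε => ?_⟩
    obtain ⟨N, hN⟩ := Metric.cauchySeq_iff.1 huv.cauchySeq (ε / (K + 1)) (by positivity)
    refine ⟨N, fun m hm k hk w hw => ?_⟩
    have h1 := hb (f m - f k) (u m - u k) ((hf m).sub (hf k))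
      ((Lp.coeFn_sub _ _).trans ((huf m).sub (huf k))) w hw
    have h2 := hN m hm k hk
    rw [dist_eq_norm, lt_div_iff₀ (by positivity)] at h2
    rw [dist_eq_norm]
    rw [Pi.sub_apply] at h1
    nlinarith [norm_nonneg (u m - u k)]
  have hex : ∀ x ∈ D, ∃ y, Tendsto (fun k => f k x) atTop (𝓝 y) := fun x hx => by
    obtain ⟨r, hr, -, h⟩ := hcau x hx
    exact cauchySeq_tendsto_of_complete (h.cauchySeq (Metric.mem_closedBall_self hr.le))
  choose! g hg using hex
  refine ⟨g, fun x hx => ?_, ?_⟩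
  · obtain ⟨r, hr, hrD, h⟩ := hcau x hx
    have hsub := Metric.ball_subset_closedBall (x := x) (ε := r)
    exact (differentiableAt_of_tendstoUniformlyOn_ball hr
      (fun k => (hf k).mono (hsub.trans hrD))
      ((h.mono hsub).tendstoUniformlyOn_of_tendsto
        fun y hy => hg y (hrD (hsub hy)))).differentiableWithinAt
  · obtain ⟨ns, hns, hlim⟩ := (tendstoInMeasure_of_tendsto_Lp huv).exists_seq_tendsto_ae
    have hD' : ∀ᵐ x ∂weightMeasure D ψ, x ∈ D :=
      (ae_weightMeasure_iff hD hψ).2 (ae_restrict_mem hD.measurableSet)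
    filter_upwards [hlim, hD', ae_all_iff.2 huf] with x h1 h2 h3
    refine tendsto_nhds_unique h1 ?_
    simp only [h3]
    exact (hg x h2).comp hns.tendsto_atTop

/-- Evaluation of `ξ` at a point of `D` is represented by an element of the Bergman space. -/
theorem exists_xiAct_eq_inner {n : ℕ} {D : Set (Fin n → ℂ)} (hD : IsOpen D)
    {ψ : (Fin n → ℂ) → ℝ} (hψ : UpperSemicontinuousOn ψ D) {z : Fin n → ℂ} (hz : z ∈ D)
    {ξ : (Fin n → ℕ) → ℂ} (hξ : MemL1 ξ) :
    ∃ v ∈ bergmanSubmodule D ψ, ∀ (f : (Fin n → ℂ) → ℂ) (u : Lp ℂ 2 (weightMeasure D ψ)),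
      DifferentiableOn ℂ f D → u =ᵐ[weightMeasure D ψ] f → xiAct ξ f z = inner ℂ v u := by
  have hrep : ∀ u : bergmanSubmodule D ψ, ∃ f, DifferentiableOn ℂ f D ∧
    (u : Lp ℂ 2 (weightMeasure D ψ)) =ᵐ[weightMeasure D ψ] f := fun u => u.2
  choose rep hrepd hrepe using hrep
  have hcongr : ∀ (u : bergmanSubmodule D ψ) (f : (Fin n → ℂ) → ℂ), DifferentiableOn ℂ f D →
      (u : Lp ℂ 2 (weightMeasure D ψ)) =ᵐ[weightMeasure D ψ] f → Set.EqOn (rep u) f D :=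
    fun u f hf hu => eqOn_of_ae_eq_weightMeasure hD hψ (hrepd u) hf ((hrepe u).symm.trans hu)
  let L₀ : bergmanSubmodule D ψ →ₗ[ℂ] ℂ :=
    { toFun := fun u => xiAct ξ (rep u) z
      map_add' := fun u v => by
        have h := hcongr (u + v) (rep u + rep v) ((hrepd u).add (hrepd v))
          ((Lp.coeFn_add (u : Lp ℂ 2 (weightMeasure D ψ)) v).trans ((hrepe u).add (hrepe v)))
        simpa using xiAct_linear (a := 1) (b := 1) hξ hD (hrepd u) (hrepd v)
          (fun w hw => by simpa using h hw) hz
      map_smul' := fun c u => by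
        have h := hcongr (c • u) (c • rep u) ((hrepd u).const_smul c)
          ((Lp.coeFn_smul c (u : Lp ℂ 2 (weightMeasure D ψ))).trans ((hrepe u).const_smul c))
        simpa using xiAct_linear (a := c) (b := 0) hξ hD (hrepd u) (hrepd u)
          (fun w hw => by simpa using h hw) hz }
  obtain ⟨r, hr, hrD, K, -, hb⟩ := exists_norm_le_mul_norm hD hψ hz
  let L : bergmanSubmodule D ψ →L[ℂ] ℂ :=
    L₀.mkContinuous (K * ∑' α : Fin n → ℕ, ‖ξ α‖ * r⁻¹ ^ mdeg α) fun u => by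
      refine (norm_xiAct_le hξ hD (hrepd u) hr hrD (hb _ _ (hrepd u) (hrepe u))).trans_eq ?_
      rw [Submodule.coe_norm]
      ring
  have : CompleteSpace (bergmanSubmodule D ψ) :=
    (isClosed_bergmanSubmodule hD hψ).completeSpace_coe
  refine ⟨(InnerProductSpace.toDual ℂ (bergmanSubmodule D ψ)).symm L, Subtype.coe_prop _,
    fun f u hf hu => ?_⟩
  have h := InnerProductSpace.toDual_symm_apply (𝕜 := ℂ) (x := (⟨u, f, hf, hu⟩ :
    bergmanSubmodule D ψ)) (y := L)
  rw [Submodule.coe_inner] at h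
  rw [h, xiAct_congr hξ hD hf (hcongr ⟨u, f, hf, hu⟩ f hf hu) hz |>.symm]
  rfl

/-- If `A²(D, e^{-ψ}) ≠ {0}`, the supremum defining the `ξ`-Bergman kernel `K^ψ_{ξ,D}(z)`
is attained by some nonzero `F₀ ∈ A²(D, e^{-ψ})`. -/
theorem statement2 {n : ℕ} (D : Set (Fin n → ℂ)) (hDo : IsOpen D) (hDc : IsConnected D)
    (z : Fin n → ℂ) (hz : z ∈ D)
    (ψ : (Fin n → ℂ) → ℝ) (hψ : PlurisubharmonicOn (fun x => (ψ x : EReal)) D)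
    (hne : ∃ f : (Fin n → ℂ) → ℂ, MemA2 D ψ f ∧ ∃ x ∈ D, f x ≠ 0)
    (ξ : (Fin n → ℕ) → ℂ) (hξ : MemL1 ξ) :
    ∃ F₀ : (Fin n → ℂ) → ℂ, MemA2 D ψ F₀ ∧ (∃ x ∈ D, F₀ x ≠ 0) ∧
      xiBergman ξ D ψ z = ENNReal.ofReal (‖xiAct ξ F₀ z‖ ^ 2) / wL2 D ψ F₀ := by
  have husc : UpperSemicontinuousOn ψ D := fun x hx y hy => by
    simpa using hψ.1 x hx y (EReal.coe_lt_coe_iff.2 hy)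
  obtain ⟨v, ⟨g, hg, hvg⟩, hv⟩ := exists_xiAct_eq_inner hDo husc hz hξ
  have hle : xiBergman ξ D ψ z ≤ ‖v‖ₑ ^ 2 := by
    refine iSup_le fun ⟨f, hf⟩ => ENNReal.div_le_of_le_mul ?_
    have hu := (hf.memLp hDo husc).coeFn_toLp
    rw [hv f _ hf.1 hu, ← enorm_sq_eq_wL2 hDo husc hu, ← mul_pow,
      ENNReal.ofReal_pow (norm_nonneg _), ← ofReal_norm, ← ofReal_norm,
      ← ENNReal.ofReal_mul (norm_nonneg _)]
    gcongr
    exact norm_inner_le_norm _ _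
  rcases eq_or_ne v 0 with rfl | hv0
  · obtain ⟨f, hf, hfne⟩ := hne
    refine ⟨f, hf, hfne, le_antisymm ?_ (le_iSup_of_le (⟨f, hf⟩ : {f // MemA2 D ψ f}) le_rfl)⟩
    exact hle.trans (by simp)
  · have hnorm := enorm_sq_eq_wL2 hDo husc hvg
    have hgA : MemA2 D ψ g := ⟨hg, hnorm ▸ ENNReal.pow_lt_top enorm_lt_top⟩
    have hpos : ‖v‖ₑ ^ 2 ≠ 0 := by simpa using hv0
    refine ⟨g, hgA, ?_, le_antisymm ?_ (le_iSup_of_le (⟨g, hgA⟩ : {f // MemA2 D ψ f}) le_rfl)⟩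
    · by_contra! h
      refine hv0 ((Lp.eq_zero_iff_ae_eq_zero).2 (hvg.trans ?_))
      exact (ae_weightMeasure_iff hDo husc).2
        ((ae_restrict_mem hDo.measurableSet).mono fun x hx => h x hx)
    · refine hle.trans ?_
      rw [hv g v hg hvg, ← hnorm, ENNReal.le_div_iff_mul_le (Or.inl hpos)
        (Or.inl (ENNReal.pow_ne_top enorm_ne_top)), inner_self_eq_norm_sq_to_K, ← ofReal_norm]
      simp [ENNReal.ofReal_pow, ← pow_add, ← pow_mul]
end
end

section
/- Let ξ(·) be a functional-valued function on a domain D ⊆ ℂᵐ with ξ(w) ∈ ℓ₁^{(n)} for all w ∈ D. Suppose that for every bounded domain Ω' ⊆ ℂⁿ, every z₀ ∈ Ω', and every F ∈ A²(Ω'), the function w ↦ (ξ(w)·F)(z₀) is holomorphic on D. Then each coefficient w ↦ ξ_α(w) is holomorphic on D, and ξ(·) satisfies the locally uniformly bounded property: for each w₀ ∈ D and ρ > 0 there is a neighborhood V of w₀ with sup_{w∈V} ∑_α |ξ_α(w)| ρ^{|α|} < ∞. -/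
open MeasureTheory Filter Topology Complex
open scoped ENNReal
noncomputable section

/-- `f` is the sum on the polydisc of radius `r` of the power series with Taylor data
`B α = f^{(α)}(0)`. -/
def HasTaylorOn {n : ℕ} (r : ℝ) (B : (Fin n → ℕ) → ℂ) (f : (Fin n → ℂ) → ℂ) : Prop :=
  ∀ z ∈ Metric.ball (0 : Fin n → ℂ) r, HasSum (fun α => B α / mfact α * ∏ i, z i ^ α i) (f z)

theorem norm_mul_monomial_le {n : ℕ} (b : ℂ) {z : Fin n → ℂ} {s : ℝ} (hz : ∀ i, ‖z i‖ ≤ s)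
    (α : Fin n → ℕ) : ‖b * ∏ i, z i ^ α i‖ ≤ ‖b‖ * s ^ mdeg α := by
  rw [norm_mul, norm_prod, mdeg, ← Finset.prod_pow_eq_pow_sum]
  refine mul_le_mul_of_nonneg_left (Finset.prod_le_prod (fun i _ => norm_nonneg _) fun i _ => ?_)
    (norm_nonneg _)
  rw [norm_pow]
  exact pow_le_pow_left₀ (norm_nonneg _) (hz i) _

theorem mfact_add_single {n : ℕ} (β : Fin n → ℕ) (i : Fin n) :
    mfact (β + Pi.single i 1) = (β i + 1) * mfact β := by
  unfold mfact
  rw [← Finset.mul_prod_erase _ _ (Finset.mem_univ i),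
    ← Finset.mul_prod_erase _ (fun j => Nat.factorial (β j)) (Finset.mem_univ i), ← mul_assoc]
  congr 1
  · simp [Nat.factorial_succ]
  · refine Finset.prod_congr rfl fun j hj => ?_
    simp [Pi.single_eq_of_ne (Finset.ne_of_mem_erase hj)]

theorem mfact_ne_zero {n : ℕ} (β : Fin n → ℕ) : (mfact β : ℂ) ≠ 0 := by
  simp [mfact, Finset.prod_eq_zero_iff, Nat.factorial_ne_zero]

theorem monomial_update {n : ℕ} (z : Fin n → ℂ) (i : Fin n) (t : ℂ) (α : Fin n → ℕ) :
    ∏ j, Function.update z i t j ^ α j = t ^ α i * ∏ j ∈ Finset.univ.erase i, z j ^ α j := by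
  rw [← Finset.mul_prod_erase _ _ (Finset.mem_univ i)]
  congr 1
  · simp
  · refine Finset.prod_congr rfl fun j hj => ?_
    rw [Function.update_of_ne (Finset.ne_of_mem_erase hj)]

theorem summable_pow_mdeg {n : ℕ} {t : ℝ} (h0 : 0 ≤ t) (h1 : t < 1) :
    Summable fun α : Fin n → ℕ => t ^ mdeg α := by
  refine summable_of_sum_le (c := ((1 - t)⁻¹) ^ n) (fun α => by positivity) fun u => ?_
  let N : ℕ := (u.sup fun α => mdeg α) + 1
  have hsub : u ⊆ Fintype.piFinset fun _ : Fin n => Finset.range N := fun α hα => by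
    rw [Fintype.mem_piFinset]
    intro i
    have h2 : α i ≤ mdeg α := Finset.single_le_sum (fun _ _ => Nat.zero_le _) (Finset.mem_univ i)
    have h3 : mdeg α ≤ u.sup fun α => mdeg α := Finset.le_sup (f := fun α => mdeg α) hα
    exact Finset.mem_range.2 (by omega)
  calc ∑ α ∈ u, t ^ mdeg α
      ≤ ∑ α ∈ Fintype.piFinset fun _ : Fin n => Finset.range N, t ^ mdeg α :=
        Finset.sum_le_sum_of_subset_of_nonneg hsub fun _ _ _ => by positivity
    _ = ∏ _i : Fin n, ∑ k ∈ Finset.range N, t ^ k := by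
        rw [Finset.prod_univ_sum]
        simp only [mdeg, Finset.prod_pow_eq_pow_sum]
    _ ≤ ∏ _i : Fin n, (1 - t)⁻¹ := by
        refine Finset.prod_le_prod (fun i _ => by positivity) fun i _ => ?_
        rw [← tsum_geometric_of_lt_one h0 h1]
        exact (summable_geometric_of_lt_one h0 h1).sum_le_tsum _ fun _ _ => by positivity
    _ = ((1 - t)⁻¹) ^ n := by simp

namespace HasTaylorOn

variable {n : ℕ} {r s : ℝ} {B : (Fin n → ℕ) → ℂ} {f : (Fin n → ℂ) → ℂ}

theorem summable_norm (h : HasTaylorOn r B f) (hs : 0 ≤ s) (hsr : s < r) :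
    Summable fun α => ‖B α / mfact α‖ * s ^ mdeg α := by
  have hz : (fun _ => (s : ℂ) : Fin n → ℂ) ∈ Metric.ball (0 : Fin n → ℂ) r := by
    rw [mem_ball_zero_iff]
    refine lt_of_le_of_lt (pi_norm_const_le _) ?_
    rwa [Complex.norm_real, Real.norm_of_nonneg hs]
  refine (h _ hz).summable.norm.congr fun α => ?_
  simp [Finset.prod_pow_eq_pow_sum, mdeg, abs_of_nonneg hs]

theorem norm_le (h : HasTaylorOn r B f) (hs : 0 ≤ s) (hsr : s < r) {z : Fin n → ℂ}
    (hz : z ∈ Metric.ball (0 : Fin n → ℂ) s) :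
    ‖f z‖ ≤ ∑' α, ‖B α / mfact α‖ * s ^ mdeg α := by
  rw [← (h z (Metric.ball_subset_ball hsr.le hz)).tsum_eq]
  rw [mem_ball_zero_iff] at hz
  exact tsum_of_norm_bounded (h.summable_norm hs hsr).hasSum
    fun α => norm_mul_monomial_le _ (fun i => (norm_le_pi_norm z i).trans hz.le) α

theorem pderivC (h : HasTaylorOn r B f) (i : Fin n) :
    HasTaylorOn r (fun α => B (α + Pi.single i 1)) (pderivC i f) := by
  intro z hz
  rw [mem_ball_zero_iff] at hz
  obtain ⟨s, hzs, hsr⟩ := exists_between hz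
  have hs : 0 < s := (norm_nonneg z).trans_lt hzs
  have hup : ∀ t ∈ Metric.ball (0 : ℂ) s, ∀ j, ‖Function.update z i t j‖ ≤ s := by
    intro t ht j
    rw [mem_ball_zero_iff] at ht
    by_cases hj : j = i
    · subst hj; simpa using ht.le
    · rw [Function.update_of_ne hj]; exact (norm_le_pi_norm z j).trans hzs.le
  have hzi : z i ∈ Metric.ball (0 : ℂ) s :=
    mem_ball_zero_iff.2 ((norm_le_pi_norm z i).trans_lt hzs)
  have hd : ∀ (α : Fin n → ℕ) (t : ℂ), HasDerivAt
      (fun t : ℂ => B α / mfact α * ∏ j, Function.update z i t j ^ α j)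
      (B α / mfact α * (α i * t ^ (α i - 1) * ∏ j ∈ Finset.univ.erase i, z j ^ α j)) t := by
    intro α t
    simp only [monomial_update]
    exact ((hasDerivAt_pow (α i) t).mul_const _).const_mul _
  have key := Complex.hasSum_deriv_of_summable_norm (h.summable_norm hs.le hsr)
    (F := fun α (t : ℂ) => B α / mfact α * ∏ j, Function.update z i t j ^ α j)
    (fun α t _ => (hd α t).differentiableAt.differentiableWithinAt) Metric.isOpen_ball
    (fun α t ht => norm_mul_monomial_le _ (hup t ht) α) hzi
  have heq : (fun t : ℂ => ∑' α, B α / mfact α * ∏ j, Function.update z i t j ^ α j)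
      =ᶠ[𝓝 (z i)] fun t => f (Function.update z i t) := by
    filter_upwards [Metric.isOpen_ball.mem_nhds hzi] with t ht
    refine (h _ (mem_ball_zero_iff.2 (lt_of_le_of_lt ?_ hsr))).tsum_eq
    exact (pi_norm_le_iff_of_nonneg hs.le).2 (hup t ht)
  rw [heq.deriv_eq] at key
  have hinj : Function.Injective fun β : Fin n → ℕ => β + Pi.single i 1 :=
    add_left_injective _
  rw [← hinj.hasSum_iff] at key
  · unfold _root_.pderivC
    refine key.congr_fun fun β => ?_
    rw [Function.comp_apply, (hd _ _).deriv, mfact_add_single,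
      ← Finset.mul_prod_erase _ _ (Finset.mem_univ i)]
    have hp : ∏ j ∈ Finset.univ.erase i, z j ^ (β + Pi.single i 1 : Fin n → ℕ) j
        = ∏ j ∈ Finset.univ.erase i, z j ^ β j := by
      refine Finset.prod_congr rfl fun j hj => ?_
      simp [Pi.single_eq_of_ne (Finset.ne_of_mem_erase hj)]
    rw [hp]
    have h1 := mfact_ne_zero β
    have h2 : (β i + 1 : ℂ) ≠ 0 := by exact_mod_cast Nat.succ_ne_zero (β i)
    simp only [Pi.add_apply, Pi.single_eq_same, Nat.add_sub_cancel]
    push_cast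
    field_simp
  · intro α hα
    have h0 : α i = 0 := by
      by_contra hne
      refine hα ⟨α - Pi.single i 1, ?_⟩
      funext j
      by_cases hj : j = i
      · subst hj; simp; omega
      · simp [Pi.single_eq_of_ne hj]
    rw [(hd _ _).deriv]
    simp [h0]

theorem iterate_pderivC (h : HasTaylorOn r B f) (i : Fin n) (k : ℕ) :
    HasTaylorOn r (fun α => B (α + Pi.single i k)) ((_root_.pderivC i)^[k] f) := by
  induction k with
  | zero => simpa using h
  | succ k ih =>
    rw [Function.iterate_succ_apply']
    have := ih.pderivC i
    simpa only [add_assoc, ← Pi.single_add, add_comm 1 k] using this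

theorem foldr_pderivC (h : HasTaylorOn r B f) (α : Fin n → ℕ) (l : List (Fin n)) :
    HasTaylorOn r (fun β => B (β + (l.map fun i => Pi.single i (α i)).sum))
      (l.foldr (fun i g => (_root_.pderivC i)^[α i] g) f) := by
  induction l with
  | nil => simpa using h
  | cons i l ih =>
    have := ih.iterate_pderivC i (α i)
    simpa only [List.foldr_cons, List.map_cons, List.sum_cons, add_assoc] using this

theorem apply_zero (h : HasTaylorOn r B f) (hr : 0 < r) : f 0 = B 0 := by
  refine (h 0 (Metric.mem_ball_self hr)).unique ?_
  convert hasSum_single (0 : Fin n → ℕ) ?_ using 1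
  · simp [mfact]
  · intro α hα
    obtain ⟨i, hi⟩ := Function.ne_iff.1 hα
    rw [Finset.prod_eq_zero (Finset.mem_univ i) (by simpa using hi), mul_zero]

theorem multiDeriv_zero (h : HasTaylorOn r B f) (hr : 0 < r) (α : Fin n → ℕ) :
    multiDeriv α f 0 = B α := by
  refine ((h.foldr_pderivC α (List.finRange n)).apply_zero hr).trans ?_
  rw [← List.ofFn_eq_map, List.sum_ofFn, zero_add, Finset.univ_sum_single]

theorem differentiableOn (h : HasTaylorOn r B f) :
    DifferentiableOn ℂ f (Metric.ball 0 r) := by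
  intro z hz
  rw [mem_ball_zero_iff] at hz
  obtain ⟨s, hzs, hsr⟩ := exists_between hz
  obtain ⟨s', hzs', hss'⟩ := exists_between hzs
  have hs : 0 < s := (norm_nonneg z).trans_lt hzs
  let g : (Fin n → ℕ) → (Fin n → ℂ) → ℂ := fun α z => B α / mfact α * ∏ i, z i ^ α i
  have hg : ∀ α, Differentiable ℂ (g α) := by
    intro α
    simp only [g]
    fun_prop
  have hb : ∀ α, ∀ x ∈ Metric.ball (0 : Fin n → ℂ) s,
      ‖g α x‖ ≤ ‖B α / mfact α‖ * s ^ mdeg α := fun α x hx =>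
    norm_mul_monomial_le _
      (fun i => (norm_le_pi_norm x i).trans (mem_ball_zero_iff.1 hx).le) α
  have hsum := h.summable_norm hs.le hsr
  have hz' : z ∈ Metric.ball (0 : Fin n → ℂ) s' := mem_ball_zero_iff.2 hzs'
  have hbd : ∀ α, ∀ x ∈ Metric.ball (0 : Fin n → ℂ) s',
      ‖fderiv ℂ (g α) x‖ ≤ 2 * (‖B α / mfact α‖ * s ^ mdeg α) / (s - s') := by
    intro α x hx
    have hsub : Metric.ball x (s - s') ⊆ Metric.ball 0 s := by
      refine Metric.ball_subset_ball' ?_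
      have := Metric.mem_ball.1 hx
      linarith
    refine norm_fderiv_le_div_of_mapsTo_ball (hg α).differentiableOn ?_ (sub_pos.2 hss')
    intro y hy
    rw [mem_closedBall_iff_norm]
    have h1 := hb α y (hsub hy)
    have h2 := hb α x (Metric.ball_subset_ball hss'.le hx)
    linarith [norm_sub_le (g α y) (g α x)]
  have key := hasFDerivAt_tsum_of_isPreconnected ((hsum.mul_left 2).div_const (s - s'))
    Metric.isOpen_ball (convex_ball (0 : Fin n → ℂ) s').isPreconnected
    (fun α x _ => (hg α x).hasFDerivAt) hbd hz' (h z (mem_ball_zero_iff.2 hz)).summable hz'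
  refine (key.differentiableAt.congr_of_eventuallyEq ?_).differentiableWithinAt
  filter_upwards [Metric.isOpen_ball.mem_nhds hz'] with x hx
  exact (h x (Metric.ball_subset_ball (hss'.le.trans hsr.le) hx)).tsum_eq.symm

end HasTaylorOn

/-- Every Taylor coefficient sequence `c α * ρ ^ |α|` with `c` bounded is realised at the origin by
a square-integrable holomorphic function on a polydisc. -/
theorem exists_xiAct_eq {n : ℕ} (c : (Fin n → ℕ) → ℂ) {C ρ : ℝ} (hc : ∀ α, ‖c α‖ ≤ C)
    (hρ : 0 < ρ) : ∃ r > 0, ∃ F : (Fin n → ℂ) → ℂ, DifferentiableOn ℂ F (Metric.ball 0 r) ∧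
      (∫⁻ x in Metric.ball (0 : Fin n → ℂ) r, ENNReal.ofReal (‖F x‖ ^ 2)) < ⊤ ∧
      ∀ ξ, xiAct ξ F 0 = ∑' α, ξ α * (c α * (ρ : ℂ) ^ mdeg α) := by
  let B : (Fin n → ℕ) → ℂ := fun α => c α * (ρ : ℂ) ^ mdeg α * mfact α
  have hB : ∀ α, B α / mfact α = c α * (ρ : ℂ) ^ mdeg α := fun α =>
    mul_div_cancel_right₀ _ (mfact_ne_zero α)
  let F : (Fin n → ℂ) → ℂ := fun z => ∑' α, B α / mfact α * ∏ i, z i ^ α i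
  have hF : HasTaylorOn ρ⁻¹ B F := by
    intro z hz
    rw [mem_ball_zero_iff] at hz
    have h1 : ρ * ‖z‖ < 1 := by
      calc ρ * ‖z‖ < ρ * ρ⁻¹ := by gcongr
        _ = 1 := mul_inv_cancel₀ hρ.ne'
    refine (Summable.of_norm_bounded
      ((summable_pow_mdeg (by positivity) h1).mul_left C) fun α => ?_).hasSum
    refine (norm_mul_monomial_le _ (norm_le_pi_norm z) α).trans ?_
    rw [hB, norm_mul, norm_pow, Complex.norm_real, Real.norm_of_nonneg hρ.le, mul_assoc,
      ← mul_pow]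
    exact mul_le_mul_of_nonneg_right (hc α) (by positivity)
  have hr : 0 < ρ⁻¹ / 2 := by positivity
  have hr' : ρ⁻¹ / 2 < ρ⁻¹ := half_lt_self (by positivity)
  refine ⟨ρ⁻¹ / 2, hr, F, hF.differentiableOn.mono (Metric.ball_subset_ball hr'.le), ?_, ?_⟩
  · refine lt_of_le_of_lt (setLIntegral_mono' measurableSet_ball (g := fun _ => ENNReal.ofReal
      ((∑' α, ‖B α / mfact α‖ * (ρ⁻¹ / 2) ^ mdeg α) ^ 2)) fun x hx => ?_) ?_
    · exact ENNReal.ofReal_le_ofReal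
        (pow_le_pow_left₀ (norm_nonneg _) (hF.norm_le hr.le hr' hx) 2)
    · rw [setLIntegral_const]
      exact ENNReal.mul_lt_top ENNReal.ofReal_lt_top measure_ball_lt_top
  · intro ξ
    unfold xiAct
    refine tsum_congr fun α => ?_
    rw [hF.multiDeriv_zero (by positivity), mul_div_assoc, hB]

/-- The functional `c ↦ ∑ α, a α * c α` on bounded sequences given by an absolutely summable
sequence `a`. -/
def l1Functional {ι : Type*} [TopologicalSpace ι] [DiscreteTopology ι] (a : ι → ℂ)
    (ha : Summable fun i => ‖a i‖) : (BoundedContinuousFunction ι ℂ) →L[ℂ] ℂ :=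
  have hs (c : BoundedContinuousFunction ι ℂ) : Summable fun i => ‖a i * c i‖ :=
    (ha.mul_right ‖c‖).of_nonneg_of_le (fun _ => norm_nonneg _) fun i => by
      rw [norm_mul]
      exact mul_le_mul_of_nonneg_left (c.norm_coe_le_norm i) (norm_nonneg _)
  LinearMap.mkContinuous
    { toFun := fun c => ∑' i, a i * c i
      map_add' := fun c d => by
        simp only [BoundedContinuousFunction.coe_add, Pi.add_apply, mul_add]
        exact (hs c).of_norm.tsum_add (hs d).of_norm
      map_smul' := fun k c => by
        simp only [BoundedContinuousFunction.coe_smul, smul_eq_mul, RingHom.id_apply,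
          mul_left_comm _ k]
        exact tsum_mul_left }
    (∑' i, ‖a i‖) fun c => tsum_of_norm_bounded (ha.hasSum.mul_right ‖c‖) fun i => by
      rw [norm_mul]
      exact mul_le_mul_of_nonneg_left (c.norm_coe_le_norm i) (norm_nonneg _)

theorem l1Functional_apply {ι : Type*} [TopologicalSpace ι] [DiscreteTopology ι] (a : ι → ℂ)
    (ha : Summable fun i => ‖a i‖) (c : BoundedContinuousFunction ι ℂ) :
    l1Functional a ha c = ∑' i, a i * c i := rfl

theorem tsum_norm_le_norm_l1Functional {ι : Type*} [TopologicalSpace ι] [DiscreteTopology ι]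
    (a : ι → ℂ) (ha : Summable fun i => ‖a i‖) : ∑' i, ‖a i‖ ≤ ‖l1Functional a ha‖ := by
  let c : BoundedContinuousFunction ι ℂ :=
    BoundedContinuousFunction.ofNormedAddCommGroupDiscrete
      (fun i => (starRingEnd ℂ) (a i) / ‖a i‖) 1 fun i => by
        rw [norm_div, RCLike.norm_conj, Complex.norm_real, norm_norm]
        exact div_self_le_one _
  have hc : ‖c‖ ≤ 1 := BoundedContinuousFunction.norm_ofNormedAddCommGroup_le _ zero_le_one _
  have hval : l1Functional a ha c = ((∑' i, ‖a i‖ : ℝ) : ℂ) := by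
    rw [l1Functional_apply, Complex.ofReal_tsum]
    refine tsum_congr fun i => ?_
    change a i * ((starRingEnd ℂ) (a i) / ‖a i‖) = ‖a i‖
    rw [← mul_div_assoc, Complex.mul_conj, Complex.normSq_eq_norm_sq]
    by_cases h : ‖a i‖ = 0
    · simp [h]
    · have : (‖a i‖ : ℂ) ≠ 0 := by exact_mod_cast h
      push_cast
      field_simp
  calc ∑' i, ‖a i‖ = ‖l1Functional a ha c‖ := by
        rw [hval, Complex.norm_real, Real.norm_of_nonneg (tsum_nonneg fun _ => norm_nonneg _)]
    _ ≤ ‖l1Functional a ha‖ * ‖c‖ := (l1Functional a ha).le_opNorm c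
    _ ≤ ‖l1Functional a ha‖ := mul_le_of_le_one_right (norm_nonneg _) hc

/-- If `w ↦ (ξ(w)·F)(z₀)` is holomorphic on `D` for every square-integrable holomorphic `F`
on every bounded domain `Ω' ⊆ ℂⁿ` and every `z₀ ∈ Ω'`, then `ξ(·)` is holomorphic and
satisfies the locally uniformly bounded property on `D`. -/
theorem statement5 {n m : ℕ} (D : Set (Fin m → ℂ)) (hDo : IsOpen D) (hDc : IsConnected D)
    (ξ : (Fin m → ℂ) → (Fin n → ℕ) → ℂ) (hmem : ∀ w ∈ D, MemL1 (ξ w))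
    (hyp : ∀ Ω' : Set (Fin n → ℂ), IsOpen Ω' → Bornology.IsBounded Ω' → IsConnected Ω' →
      ∀ z₀ ∈ Ω', ∀ F : (Fin n → ℂ) → ℂ, DifferentiableOn ℂ F Ω' →
        (∫⁻ x in Ω', ENNReal.ofReal (‖F x‖ ^ 2)) < ⊤ →
        DifferentiableOn ℂ (fun w => xiAct (ξ w) F z₀) D) :
    (∀ α : Fin n → ℕ, DifferentiableOn ℂ (fun w => ξ w α) D) ∧ LocUnifBdd ξ D := by
  have hol : ∀ (c : (Fin n → ℕ) → ℂ) (C ρ : ℝ), (∀ α, ‖c α‖ ≤ C) → 0 < ρ →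
      DifferentiableOn ℂ (fun w => ∑' α, ξ w α * (c α * (ρ : ℂ) ^ mdeg α)) D := by
    intro c C ρ hc hρ
    obtain ⟨r, hr, F, hF, hL2, hact⟩ := exists_xiAct_eq c hc hρ
    refine (hyp (Metric.ball 0 r) Metric.isOpen_ball Metric.isBounded_ball
      (Metric.isConnected_ball hr) 0 (Metric.mem_ball_self hr) F hF hL2).congr fun w _ => ?_
    exact (hact (ξ w)).symm
  refine ⟨fun β => ?_, ?_⟩
  · refine (hol (Pi.single β 1) 1 1 (fun α => ?_) one_pos).congr fun w _ => ?_
    · by_cases h : α = β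
      · subst h; simp
      · simp [Pi.single_eq_of_ne h]
    · rw [tsum_eq_single β fun α h => by simp [Pi.single_eq_of_ne h]]
      simp
  · intro w₀ hw₀ ρ hρ
    obtain ⟨K, hK, hKD, hKc⟩ := local_compact_nhds (hDo.mem_nhds hw₀)
    have hnorm : ∀ w α, ‖ξ w α * (ρ : ℂ) ^ mdeg α‖ = ‖ξ w α‖ * ρ ^ mdeg α := by
      intro w α
      rw [norm_mul, norm_pow, Complex.norm_real, Real.norm_of_nonneg hρ.le]
    have ha : ∀ w ∈ D, Summable fun α => ‖ξ w α * (ρ : ℂ) ^ mdeg α‖ := fun w hw =>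
      (hmem w hw ρ hρ).congr fun α => (hnorm w α).symm
    obtain ⟨C, hC⟩ := banach_steinhaus
      (g := fun w : K => l1Functional (fun α => ξ w α * (ρ : ℂ) ^ mdeg α) (ha w (hKD w.2))) (by
        intro c
        obtain ⟨M, hM⟩ := hKc.exists_bound_of_continuousOn
          ((hol c ‖c‖ ρ c.norm_coe_le_norm hρ).continuousOn.mono hKD)
        refine ⟨M, fun w => ?_⟩
        rw [l1Functional_apply]
        refine (congrArg norm (tsum_congr fun α => ?_)).trans_le (hM w w.2)
        simp only [mul_assoc, mul_comm (c α)])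
    refine ⟨K, hK, C, fun w hw => ?_⟩
    rw [← ENNReal.ofReal_tsum_of_nonneg (fun α => by positivity) (hmem w hw.2 ρ hρ)]
    refine ENNReal.ofReal_le_ofReal (le_trans ?_ (hC ⟨w, hw.1⟩))
    refine le_trans (le_of_eq ?_) (tsum_norm_le_norm_l1Functional _ _)
    exact tsum_congr fun α => (hnorm w α).symm
end
end
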